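/- Let M(1),…,M(n) be an n-outcome POVM on ℂ^d ⊗ ℂ^k, let ξ₁, ξ₂ be density matrices on ℂ^k, and let A₁, A₂ be n-outcome PVMs on ℂ^d programmed by ξ₁ and ξ₂ respectively, i.e., Tr[A_j(i)ρ] = Tr[M(i)(ρ ⊗ ξ_j)] for every density matrix ρ on ℂ^d, every outcome i, and j = 1,2. If A₁ ≠ A₂, then F(ξ₁,ξ₂) = 0; equivalently, the programming states ξ₁ and ξ₂ are orthogonal (their supports intersect trivially). -/

import Mathlib

open scoped BigOperators Kronecker ComplexOrder Matrix

noncomputable section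

/-- The positive semidefinite square root of a positive semidefinite matrix
(the former Mathlib definition, since removed). -/
noncomputable def Matrix.PosSemidef.sqrt {n : Type*} [Fintype n] [DecidableEq n]
    {A : Matrix n n ℂ} (hA : A.PosSemidef) : Matrix n n ℂ :=
  hA.1.eigenvectorUnitary.1 * Matrix.diagonal ((↑) ∘ Real.sqrt ∘ hA.1.eigenvalues) *
  (star hA.1.eigenvectorUnitary : Matrix n n ℂ)


namespace QProg

/-- The positive-semidefinite square root of a matrix, extended by `0` to all matrices. -/
noncomputable def matSqrt {α : Type*} [Fintype α] [DecidableEq α]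
    (A : Matrix α α ℂ) : Matrix α α ℂ :=
  @dite _ A.PosSemidef (Classical.propDecidable _) (fun h => h.sqrt) (fun _ => 0)

/-- The fidelity `F(ρ,σ) = Tr √(√ρ σ √ρ)` of two (density) matrices. -/
noncomputable def fid {α : Type*} [Fintype α] [DecidableEq α]
    (ρ σ : Matrix α α ℂ) : ℝ :=
  ((matSqrt (matSqrt ρ * σ * matSqrt ρ)).trace).re

/-- A density matrix: positive semidefinite with unit trace. -/
def IsDensity {α : Type*} [Fintype α] [DecidableEq α] (ρ : Matrix α α ℂ) : Prop :=
  ρ.PosSemidef ∧ ρ.trace = 1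

/-- An `n`-outcome POVM: positive semidefinite effects summing to the identity. -/
def IsPOVM {α : Type*} [Fintype α] [DecidableEq α] {n : ℕ}
    (E : Fin n → Matrix α α ℂ) : Prop :=
  (∀ i, (E i).PosSemidef) ∧ ∑ i, E i = 1

/-- The outcome distribution `p^E_ρ(i) = Tr[E(i) ρ]`. -/
noncomputable def outDist {α : Type*} [Fintype α] [DecidableEq α] {n : ℕ}
    (E : Fin n → Matrix α α ℂ) (ρ : Matrix α α ℂ) (i : Fin n) : ℝ :=
  ((E i * ρ).trace).re

/-- The Bhattacharyya coefficient `B(p,q) = ∑ᵢ √(p i) √(q i)`. -/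
noncomputable def bhat {n : ℕ} (p q : Fin n → ℝ) : ℝ :=
  ∑ i, Real.sqrt (p i) * Real.sqrt (q i)

/-- `B(E₁,E₂)`: infimum of `B(p^{E₁}_{ρ₁}, p^{E₂}_{ρ₂}) / F(ρ₁,ρ₂)` over pairs of
density matrices with nonvanishing fidelity. -/
noncomputable def obsB {α : Type*} [Fintype α] [DecidableEq α] {n : ℕ}
    (E₁ E₂ : Fin n → Matrix α α ℂ) : ℝ :=
  sInf { r : ℝ | ∃ ρ₁ ρ₂ : Matrix α α ℂ, IsDensity ρ₁ ∧ IsDensity ρ₂ ∧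
    fid ρ₁ ρ₂ ≠ 0 ∧ r = bhat (outDist E₁ ρ₁) (outDist E₂ ρ₂) / fid ρ₁ ρ₂ }

/-- A post-processing from `n` outcomes to `m` outcomes. -/
def IsPostProc {n m : ℕ} (lam : Fin n → Fin m → ℝ) : Prop :=
  (∀ i y, 0 ≤ lam i y) ∧ ∀ i, ∑ y, lam i y = 1

/-- The action `(λ⋆E)(y) = ∑ᵢ λ(i|y) E(i)` of a post-processing on a POVM. -/
noncomputable def ppStar {α : Type*} [Fintype α] [DecidableEq α] {n m : ℕ}
    (lam : Fin n → Fin m → ℝ) (E : Fin n → Matrix α α ℂ) (y : Fin m) :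
    Matrix α α ℂ :=
  ∑ i, (lam i y : ℂ) • E i

/-- The action `(λ⋆p)(y) = ∑ᵢ λ(i|y) p(i)` of a post-processing on a probability vector. -/
noncomputable def ppStarVec {n m : ℕ} (lam : Fin n → Fin m → ℝ) (p : Fin n → ℝ)
    (y : Fin m) : ℝ :=
  ∑ i, lam i y * p i

/-- A probability vector on `{1,…,n}`. -/
def IsProbVec {n : ℕ} (p : Fin n → ℝ) : Prop :=
  (∀ i, 0 ≤ p i) ∧ ∑ i, p i = 1

/-- `F(λ₁,λ₂)`: infimum of `B(λ₁⋆p, λ₂⋆p)` over probability vectors `p`. -/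
noncomputable def ppF {n m : ℕ} (lam₁ lam₂ : Fin n → Fin m → ℝ) : ℝ :=
  sInf { r : ℝ | ∃ p : Fin n → ℝ, IsProbVec p ∧
    r = bhat (ppStarVec lam₁ p) (ppStarVec lam₂ p) }

/-- A PVM (sharp observable): a POVM all of whose effects are projections. -/
def IsPVM {α : Type*} [Fintype α] [DecidableEq α] {n : ℕ}
    (E : Fin n → Matrix α α ℂ) : Prop :=
  IsPOVM E ∧ ∀ i, E i * E i = E i

/-!
An effect `N` on the system and probe which programs a projection `P` with the state `ξ` satisfies
`N (1 ⊗ ξ) = P ⊗ ξ`: the positive matrices `N` and `(1 - P) ⊗ ξ` have a product of zero trace, hence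
zero product, and the same holds for the complements `1 - N` and `1 - P`. If `N` also programs `Q`
with `η`, computing `(1 ⊗ ξ) N (1 ⊗ η)` in two ways gives `P ⊗ ξ η = Q ⊗ ξ η`, so `P ≠ Q` forces
`ξ η = 0`, and then `√ξ η √ξ = 0`.
-/

section

open scoped MatrixOrder

lemma kronecker_eq_zero_iff {m n p q R : Type*} [MulZeroClass R] [NoZeroDivisors R]
    {A : Matrix m n R} {B : Matrix p q R} : A ⊗ₖ B = 0 ↔ A = 0 ∨ B = 0 := by
  refine ⟨fun h => ?_, ?_⟩
  · by_contra! ⟨hA, hB⟩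
    obtain ⟨i, j, hij⟩ : ∃ i j, A i j ≠ 0 := by simpa [← Matrix.ext_iff] using hA
    obtain ⟨k, l, hkl⟩ : ∃ k l, B k l ≠ 0 := by simpa [← Matrix.ext_iff] using hB
    exact mul_ne_zero hij hkl (congrFun (congrFun h (i, k)) (j, l))
  · rintro (rfl | rfl)
    · exact Matrix.zero_kronecker B
    · exact Matrix.kronecker_zero A

lemma trace_mul_eq_zero_iff {n 𝕜 : Type*} [RCLike 𝕜] [Fintype n] {A B : Matrix n n 𝕜}
    (hA : A.PosSemidef) (hB : B.PosSemidef) :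
    (A * B).trace = 0 ↔ A * B = 0 := by
  classical
  obtain ⟨C, rfl⟩ := CStarAlgebra.nonneg_iff_eq_star_mul_self.mp hA.nonneg
  obtain ⟨D, rfl⟩ := CStarAlgebra.nonneg_iff_eq_mul_star_self.mp hB.nonneg
  simp only [Matrix.star_eq_conjTranspose]
  have htrace : (Cᴴ * C * (D * Dᴴ)).trace = (C * D * (C * D)ᴴ).trace := by
    rw [Matrix.mul_assoc, Matrix.trace_mul_comm, Matrix.conjTranspose_mul]
    simp only [Matrix.mul_assoc]
  rw [htrace, Matrix.trace_mul_conjTranspose_self_eq_zero_iff,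
    Matrix.conjTranspose_mul_self_mul_eq_zero, Matrix.mul_self_mul_conjTranspose_eq_zero]

section Fidelity

variable {α : Type*} [Fintype α] [DecidableEq α]

lemma matSqrt_eq_cfcSqrt (A : Matrix α α ℂ) : matSqrt A = CFC.sqrt A := by
  by_cases hA : A.PosSemidef
  · rw [matSqrt, dif_pos hA, CFC.sqrt_eq_real_sqrt A hA.nonneg, cfcₙ_eq_cfc, hA.1.cfc_eq]
    rfl
  · rw [matSqrt, dif_neg hA, CFC.sqrt_of_not_nonneg (mt Matrix.nonneg_iff_posSemidef.mp hA)]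

lemma fid_eq_zero_of_mul_eq_zero {ρ σ : Matrix α α ℂ} (hρ : ρ.PosSemidef) (h : ρ * σ = 0) :
    fid ρ σ = 0 := by
  have hsqrt : CFC.sqrt ρ * σ = 0 := by
    rw [← Matrix.conjTranspose_mul_self_mul_eq_zero, ← Matrix.star_eq_conjTranspose,
      (CFC.sqrt_nonneg ρ).star_eq, CFC.sqrt_mul_sqrt_self ρ hρ.nonneg, h]
  rw [fid, matSqrt_eq_cfcSqrt, matSqrt_eq_cfcSqrt, hsqrt, Matrix.zero_mul, CFC.sqrt_zero,
    Matrix.trace_zero, Complex.zero_re]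

end Fidelity

section Observables

variable {α : Type*} [Fintype α] [DecidableEq α] {n : ℕ} {E : Fin n → Matrix α α ℂ}

lemma IsPOVM.mem_Icc (hE : IsPOVM E) (i : Fin n) : E i ∈ Set.Icc 0 1 :=
  ⟨(hE.1 i).nonneg, hE.2 ▸ Finset.single_le_sum (fun j _ => (hE.1 j).nonneg) (Finset.mem_univ i)⟩

lemma IsPVM.isStarProjection (hE : IsPVM E) (i : Fin n) : IsStarProjection (E i) :=
  ⟨hE.2 i, (hE.1.1 i).1⟩

end Observables

section Programming

variable {α β : Type*} [Fintype α] [DecidableEq α] [Fintype β]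

/-- The effect `N` on system and probe programs the system effect `P` when the probe is prepared in
the state `ξ`: measuring `N` on `ρ ⊗ ξ` has the same probability as measuring `P` on `ρ`. -/
def Programs (N : Matrix (α × β) (α × β) ℂ) (ξ : Matrix β β ℂ) (P : Matrix α α ℂ) : Prop :=
  ∀ ρ : Matrix α α ℂ, IsDensity ρ → (P * ρ).trace = (N * (ρ ⊗ₖ ξ)).trace

namespace Programs

variable {N : Matrix (α × β) (α × β) ℂ} {ξ η : Matrix β β ℂ} {P Q : Matrix α α ℂ}

lemma trace_mul_of_posSemidef (h : Programs N ξ P) {ρ : Matrix α α ℂ} (hρ : ρ.PosSemidef) :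
    (P * ρ).trace = (N * (ρ ⊗ₖ ξ)).trace := by
  by_cases htr : ρ.trace = 0
  · rw [hρ.trace_eq_zero_iff.mp htr]
    simp
  · have hdensity : IsDensity (ρ.trace⁻¹ • ρ) :=
      ⟨hρ.smul (inv_nonneg.mpr hρ.trace_nonneg), by
        rw [Matrix.trace_smul, smul_eq_mul, inv_mul_cancel₀ htr]⟩
    have hscaled := h _ hdensity
    simp only [Matrix.smul_kronecker, Matrix.mul_smul, Matrix.trace_smul, smul_eq_mul] at hscaled
    exact mul_left_cancel₀ (inv_ne_zero htr) hscaled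

lemma mul_one_sub_kronecker (h : Programs N ξ P) (hN : N.PosSemidef) (hξ : ξ.PosSemidef)
    (hP : IsStarProjection P) : N * ((1 - P) ⊗ₖ ξ) = 0 := by
  have hcompl : (1 - P).PosSemidef := Matrix.nonneg_iff_posSemidef.mp hP.one_sub_nonneg
  rw [← trace_mul_eq_zero_iff hN (hcompl.kronecker hξ), ← h.trace_mul_of_posSemidef hcompl,
    hP.mul_one_sub_self, Matrix.trace_zero]

variable [DecidableEq β]

lemma one_sub (h : Programs N ξ P) (hξ : ξ.trace = 1) : Programs (1 - N) ξ (1 - P) := by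
  intro ρ hρ
  simp only [Matrix.sub_mul, Matrix.one_mul, Matrix.trace_sub, Matrix.trace_kronecker, hξ, mul_one,
    h ρ hρ]

lemma mul_one_kronecker (h : Programs N ξ P) (hN : N ∈ Set.Icc 0 1) (hξ : IsDensity ξ)
    (hP : IsStarProjection P) : N * (1 ⊗ₖ ξ) = P ⊗ₖ ξ := by
  have hcompl : N * ((1 - P) ⊗ₖ ξ) = 0 := h.mul_one_sub_kronecker
    (Matrix.nonneg_iff_posSemidef.mp hN.1) hξ.1 hP
  have hself : (1 - N) * (P ⊗ₖ ξ) = 0 := by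
    simpa only [sub_sub_cancel] using
      (h.one_sub hξ.2).mul_one_sub_kronecker (Matrix.le_iff.mp hN.2) hξ.1 hP.one_sub
  calc N * (1 ⊗ₖ ξ) = N * ((1 - P) ⊗ₖ ξ) + N * (P ⊗ₖ ξ) := by
        rw [← Matrix.mul_add, ← Matrix.add_kronecker, sub_add_cancel]
    _ = N * (P ⊗ₖ ξ) := by rw [hcompl, zero_add]
    _ = P ⊗ₖ ξ := by rwa [Matrix.sub_mul, Matrix.one_mul, sub_eq_zero, eq_comm] at hself

lemma one_kronecker_mul (h : Programs N ξ P) (hN : N ∈ Set.Icc 0 1) (hξ : IsDensity ξ)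
    (hP : IsStarProjection P) : (1 ⊗ₖ ξ) * N = P ⊗ₖ ξ := by
  have hadj := congrArg Matrix.conjTranspose (h.mul_one_kronecker hN hξ hP)
  have hN_herm : Nᴴ = N := (Matrix.nonneg_iff_posSemidef.mp hN.1).1
  have hP_herm : Pᴴ = P := hP.isSelfAdjoint
  simpa only [Matrix.conjTranspose_mul, Matrix.conjTranspose_kronecker, Matrix.conjTranspose_one,
    hN_herm, hP_herm, hξ.1.1.eq] using hadj

lemma mul_eq_zero_of_ne (hP : Programs N ξ P) (hQ : Programs N η Q) (hN : N ∈ Set.Icc 0 1)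
    (hξ : IsDensity ξ) (hη : IsDensity η) (hPproj : IsStarProjection P)
    (hQproj : IsStarProjection Q) (hne : P ≠ Q) : ξ * η = 0 := by
  have hkron : P ⊗ₖ (ξ * η) = Q ⊗ₖ (ξ * η) :=
    calc P ⊗ₖ (ξ * η) = (P ⊗ₖ ξ) * (1 ⊗ₖ η) := by
          rw [← Matrix.mul_kronecker_mul, Matrix.mul_one]
      _ = (1 ⊗ₖ ξ) * (N * (1 ⊗ₖ η)) := by
          rw [← hP.one_kronecker_mul hN hξ hPproj, Matrix.mul_assoc]
      _ = (1 ⊗ₖ ξ) * (Q ⊗ₖ η) := by rw [hQ.mul_one_kronecker hN hη hQproj]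
      _ = Q ⊗ₖ (ξ * η) := by rw [← Matrix.mul_kronecker_mul, Matrix.one_mul]
  have hdiff : (P - Q) ⊗ₖ (ξ * η) = 0 := by
    rw [sub_eq_add_neg, Matrix.add_kronecker, hkron, ← Matrix.add_kronecker, add_neg_cancel,
      Matrix.zero_kronecker]
  exact (kronecker_eq_zero_iff.mp hdiff).resolve_left (sub_ne_zero.mpr hne)

end Programs

variable [DecidableEq β]

theorem sharp_programming_orthogonal_general {N : Matrix (α × β) (α × β) ℂ}
    {ξ₁ ξ₂ : Matrix β β ℂ} {P₁ P₂ : Matrix α α ℂ} (hN : N ∈ Set.Icc 0 1)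
    (hξ₁ : IsDensity ξ₁) (hξ₂ : IsDensity ξ₂)
    (hP₁ : IsStarProjection P₁) (hP₂ : IsStarProjection P₂)
    (hprog₁ : Programs N ξ₁ P₁) (hprog₂ : Programs N ξ₂ P₂) (hne : P₁ ≠ P₂) :
    fid ξ₁ ξ₂ = 0 :=
  fid_eq_zero_of_mul_eq_zero hξ₁.1 <|
    hprog₁.mul_eq_zero_of_ne hprog₂ hN hξ₁ hξ₂ hP₁ hP₂ hne

end Programming

end

/-- Example 1: programming two different sharp observables requires
orthogonal programming states: `F(ξ₁,ξ₂) = 0`. -/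
theorem sharp_programming_orthogonal {d k n : ℕ}
    (M : Fin n → Matrix (Fin d × Fin k) (Fin d × Fin k) ℂ) (hM : IsPOVM M)
    (ξ₁ ξ₂ : Matrix (Fin k) (Fin k) ℂ) (hξ₁ : IsDensity ξ₁) (hξ₂ : IsDensity ξ₂)
    (A₁ A₂ : Fin n → Matrix (Fin d) (Fin d) ℂ) (hA₁ : IsPVM A₁) (hA₂ : IsPVM A₂)
    (hprog₁ : ∀ ρ : Matrix (Fin d) (Fin d) ℂ, IsDensity ρ →
      ∀ i, (A₁ i * ρ).trace = (M i * (ρ ⊗ₖ ξ₁)).trace)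
    (hprog₂ : ∀ ρ : Matrix (Fin d) (Fin d) ℂ, IsDensity ρ →
      ∀ i, (A₂ i * ρ).trace = (M i * (ρ ⊗ₖ ξ₂)).trace)
    (hne : A₁ ≠ A₂) :
    fid ξ₁ ξ₂ = 0 := by
  obtain ⟨i, hi⟩ := Function.ne_iff.mp hne
  exact sharp_programming_orthogonal_general (hM.mem_Icc i) hξ₁ hξ₂ (hA₁.isStarProjection i)
    (hA₂.isStarProjection i) (hprog₁ · · i) (hprog₂ · · i) hi

end QProg
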